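/- Let n ∈ ℕ with 1 ≤ n < 2^{r+1} for some r ∈ ℕ, and let m = n + 36 · 2^{r+1}. Then Z(n) ≡ Z(m) (mod 8). -/

import Mathlib

/-!
Write `n! = 2 ^ v * u` with `u` odd. Then `Z n = 2 ^ (v % 2) * u`, so it suffices to show that
the parity of `v` and the class of `u` mod `8` agree for `n` and `m`. Splitting `n!` into its odd
and even factors gives `n! = D * 2 ^ (n / 2) * (n / 2)!`, where `D` is the product of the odd
numbers up to `n`. Since `1 * 3 * 5 * 7 ≡ 1 [MOD 8]`, the class of `D` mod `8` depends only on
`n` mod `8`. For `n < 2 ^ (s + 1)`, halving takes the pair `n`, `n + 36 * 2 ^ (s + 1)` to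
`n / 2`, `n / 2 + 36 * 2 ^ s`: the exponents `n / 2` have the same parity and the two products of
odd numbers agree mod `8`, as `8 ∣ 36 * 2 ^ (s + 1)`. Induction on `s` reduces everything to
comparing `0!` with `36!`, and `36! = 2 ^ 34 * w` with `w ≡ 1 [MOD 8]`.
-/

open Nat in
/-- `Z n = n! / 4^⌊γ/2⌋` where `γ` is the 2-adic valuation of `n!`,
so that `n! = 4^⌊γ/2⌋ * Z n`. -/
def Z (n : ℕ) : ℕ := n ! / 4 ^ (padicValNat 2 (n !) / 2)

open Nat

/-- The product of the first `k` odd numbers; with `k = (n + 1) / 2`, the product of the odd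
numbers up to `n`. -/
def oddProd (k : ℕ) : ℕ := ∏ i ∈ Finset.range k, (2 * i + 1)

lemma oddProd_succ (k : ℕ) : oddProd (k + 1) = oddProd k * (2 * k + 1) :=
  Finset.prod_range_succ _ _

lemma odd_oddProd (k : ℕ) : Odd (oddProd k) := by
  induction k with
  | zero => simp [oddProd]
  | succ k ih => rw [oddProd_succ]; exact ih.mul (odd_two_mul_add_one k)

lemma oddProd_add_four (k : ℕ) : oddProd (k + 4) ≡ oddProd k [MOD 8] := by
  have h : (2 * k + 1) * (2 * (k + 1) + 1) * (2 * (k + 2) + 1) * (2 * (k + 3) + 1) ≡ 1 [MOD 8] := by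
    rw [← ZMod.natCast_eq_natCast_iff]
    push_cast
    generalize (k : ZMod 8) = x
    revert x
    decide
  simp only [oddProd_succ]
  calc _ = oddProd k *
        ((2 * k + 1) * (2 * (k + 1) + 1) * (2 * (k + 2) + 1) * (2 * (k + 3) + 1)) := by ring
    _ ≡ oddProd k * 1 [MOD 8] := h.mul_left _
    _ = oddProd k := mul_one _

lemma oddProd_add_four_mul (k t : ℕ) : oddProd (k + 4 * t) ≡ oddProd k [MOD 8] := by
  induction t with
  | zero => rfl
  | succ t ih => exact (oddProd_add_four (k + 4 * t)).trans ih

lemma factorial_two_mul_eq (k : ℕ) : (2 * k)! = oddProd k * 2 ^ k * k ! := by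
  induction k with
  | zero => simp [oddProd]
  | succ k ih =>
    rw [show 2 * (k + 1) = 2 * k + 1 + 1 by ring, factorial_succ, factorial_succ, ih,
      oddProd_succ, factorial_succ]
    ring

lemma factorial_eq_oddProd (n : ℕ) :
    n ! = oddProd ((n + 1) / 2) * 2 ^ (n / 2) * (n / 2)! := by
  obtain ⟨k, rfl | rfl⟩ := n.even_or_odd'
  · rw [show (2 * k + 1) / 2 = k by omega, show 2 * k / 2 = k by omega]
    exact factorial_two_mul_eq k
  · rw [show (2 * k + 1 + 1) / 2 = k + 1 by omega, show (2 * k + 1) / 2 = k by omega,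
      factorial_succ, factorial_two_mul_eq, oddProd_succ]
    ring

/-- The 2-adic valuations of `a !` and `b !` have the same parity and their odd parts agree
mod `8`. -/
def SameClass (a b : ℕ) : Prop :=
  ∃ i j u w : ℕ, a ! = 2 ^ i * u ∧ b ! = 2 ^ j * w ∧ Odd u ∧ Odd w ∧
    i % 2 = j % 2 ∧ u ≡ w [MOD 8]

lemma sameClass_shift (s : ℕ) : ∀ n < 2 ^ s, SameClass n (n + 36 * 2 ^ s) := by
  induction s with
  | zero =>
    intro n hn
    obtain rfl : n = 0 := by simpa using hn
    refine ⟨0, 34, 1, 36 ! / 2 ^ 34, ?_, ?_, ?_, ?_, ?_, ?_⟩ <;> decide +kernel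
  | succ s ih =>
    intro n hn
    rw [pow_succ] at hn ⊢
    obtain ⟨i, j, u, w, ha, hb, hu, hw, hij, huw⟩ := ih (n / 2) (by omega)
    have hm : (n + 36 * (2 ^ s * 2)) / 2 = n / 2 + 36 * 2 ^ s := by omega
    have hm' : (n + 36 * (2 ^ s * 2) + 1) / 2 = (n + 1) / 2 + 4 * (9 * 2 ^ s) := by omega
    refine ⟨n / 2 + i, n / 2 + 36 * 2 ^ s + j, oddProd ((n + 1) / 2) * u,
      oddProd ((n + 1) / 2 + 4 * (9 * 2 ^ s)) * w, ?_, ?_, (odd_oddProd _).mul hu,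
      (odd_oddProd _).mul hw, by omega, (oddProd_add_four_mul _ _).symm.mul huw⟩
    · rw [factorial_eq_oddProd, ha]; ring
    · rw [factorial_eq_oddProd, hm, hm', hb]; ring

lemma Z_eq_of_factorial_eq {n i u : ℕ} (h : n ! = 2 ^ i * u) (hu : Odd u) :
    Z n = 2 ^ (i % 2) * u := by
  have hv : padicValNat 2 (n !) = i := by
    rw [h, padicValNat.mul (by positivity) hu.pos.ne', padicValNat.prime_pow,
      padicValNat.eq_zero_of_not_dvd hu.not_two_dvd_nat, add_zero]
  have h4 : n ! = 4 ^ (i / 2) * (2 ^ (i % 2) * u) := by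
    rw [h, ← mul_assoc, show 4 = 2 ^ 2 by rfl, ← pow_mul, ← pow_add, Nat.div_add_mod]
  rw [Z, hv, h4, Nat.mul_div_cancel_left _ (by positivity)]

theorem stmt_15 (n r : ℕ) (hn : 1 ≤ n) (hnr : n < 2 ^ (r + 1))
    (m : ℕ) (hm : m = n + 36 * 2 ^ (r + 1)) :
    Z n ≡ Z m [MOD 8] := by
  subst hm
  obtain ⟨i, j, u, w, ha, hb, hu, hw, hij, huw⟩ := sameClass_shift (r + 1) n hnr
  rw [Z_eq_of_factorial_eq ha hu, Z_eq_of_factorial_eq hb hw, hij]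
  exact huw.mul_left _
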